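/- arXiv:2209.14132 — 2 statements merged into one kernel-verified Lean document; each statement's English description precedes it below -/
import Mathlib

section
/- Fix positive integers c, m, s, let A_1,…,A_s be nonzero 0-1 matrices each with c rows and m columns, and for n ≥ m let I_n ⊆ R_n be the ideal generated by the Sym(n)-orbits of x^{A_1},…,x^{A_s} (each A_i regarded as a c×n matrix by appending zero columns). Then: (1) there exist a polynomial p with rational coefficients of degree at most binom(c,⌊c/2⌋) − 1 and an integer N such that for all n ≥ N, the number of Sym(n)-orbits on the set of minimal monomial generators of I_n^∨ equals p(n); (2) there exist integers α, β, a polynomial q with rational coefficients, and an integer N' such that for all n ≥ N', the least degree of a minimal generator of I_n^∨ equals d(n) = αn + β, and the number of Sym(n)-orbits on the set of minimal monomial generators of I_n^∨ of degree d(n) equals q(n). -/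
open MvPolynomial Finset

noncomputable section

/-- The squarefree monomial `x^B` with exponent matrix `B`, columns given as subsets of `[c]`. -/
def matMon (K : Type*) [CommSemiring K] {c n : ℕ}
    (B : Fin n → Finset (Fin c)) : MvPolynomial (Fin c × Fin n) K :=
  ∏ j : Fin n, ∏ i ∈ B j, X (i, j)

/-- Pad a `c × m` matrix with zero columns to a `c × n` matrix. -/
def pad {c m : ℕ} (n : ℕ) (A : Fin m → Finset (Fin c)) : Fin n → Finset (Fin c) :=
  fun j => if h : (j : ℕ) < m then A ⟨j, h⟩ else ∅

/-- The ideal `I_n ⊆ R_n` generated by the `Sym(n)`-orbits of `x^{A_1}, …, x^{A_s}`. -/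
def chainIdeal (K : Type*) [CommSemiring K] {c m s : ℕ}
    (A : Fin s → Fin m → Finset (Fin c)) (n : ℕ) :
    Ideal (MvPolynomial (Fin c × Fin n) K) :=
  Ideal.span {p | ∃ (i : Fin s) (σ : Equiv.Perm (Fin n)),
    p = rename (fun v : Fin c × Fin n => (v.1, σ v.2)) (matMon K (pad n (A i)))}

/-- The Alexander dual of a squarefree monomial ideal. -/
def dualIdeal (K : Type*) [CommSemiring K] {c n : ℕ}
    (I : Ideal (MvPolynomial (Fin c × Fin n) K)) : Ideal (MvPolynomial (Fin c × Fin n) K) :=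
  Ideal.span {p | ∃ B : Fin n → Finset (Fin c),
    matMon K (fun j => (B j)ᶜ) ∉ I ∧ p = matMon K B}

/-- `x^B` is a minimal (monomial) generator of `I`. -/
def IsMinGen (K : Type*) [CommSemiring K] {c n : ℕ}
    (I : Ideal (MvPolynomial (Fin c × Fin n) K)) (B : Fin n → Finset (Fin c)) : Prop :=
  matMon K B ∈ I ∧
    ∀ B'' : Fin n → Finset (Fin c), (∀ j, B'' j ⊆ B j) → B'' ≠ B → matMon K B'' ∉ I

/-- The `Sym(n)`-orbit of the squarefree monomial `x^B`. -/
def orbitOf (K : Type*) [CommSemiring K] {c n : ℕ} (B : Fin n → Finset (Fin c)) :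
    Set (MvPolynomial (Fin c × Fin n) K) :=
  {q | ∃ σ : Equiv.Perm (Fin n),
    q = rename (fun v : Fin c × Fin n => (v.1, σ v.2)) (matMon K B)}

section CombHelpers

variable {P : Type*} [Fintype P] [DecidableEq P]

def truncF (M : ℕ) (v : P → ℕ) : P → ℕ := fun T => min (v T) M

lemma cell_card (g : P → ℕ) (S : Finset P) (n : ℕ) (h : ∑ T, g T ≤ n) :
    #{v ∈ piAntidiag univ n | (∀ T ∉ S, v T = g T) ∧ ∀ T, g T ≤ v T} =
      (#S).multichoose (n - ∑ T, g T) := by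
  rw [← card_finsuppAntidiag_nat_eq_multichoose]
  refine Finset.card_bij' (fun v _ => Finsupp.equivFunOnFinite.symm (fun T => v T - g T))
    (fun u _ => fun T => u T + g T) ?_ ?_ ?_ ?_
  · intro v hv
    simp only [mem_filter, mem_piAntidiag, mem_univ, implies_true, and_true] at hv
    obtain ⟨h1, h2, h3⟩ := hv
    rw [mem_finsuppAntidiag]
    constructor
    · have : ∑ T ∈ S, (v T - g T) = ∑ T, (v T - g T) := by
        apply Finset.sum_subset (Finset.subset_univ _)
        intro T _ hT
        simp [h2 T hT]
      simp only [Finsupp.equivFunOnFinite_symm_apply_apply]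
      rw [this, Finset.sum_tsub_distrib _ (fun T _ => h3 T), h1]
    · intro T hT
      simp at hT
      by_contra hS
      have := h2 T hS
      omega
  · intro u hu
    rw [mem_finsuppAntidiag] at hu
    obtain ⟨h1, h2⟩ := hu
    have h4 : ∀ T ∉ S, u T = 0 := fun T hT => by
      by_contra h0
      exact hT (h2 (by simpa using h0))
    simp only [mem_filter, mem_piAntidiag, mem_univ, implies_true, and_true]
    refine ⟨?_, fun T hT => by simp [h4 T hT], fun T => by simp⟩
    rw [Finset.sum_add_distrib, ← Finset.sum_subset (Finset.subset_univ S) (fun T _ hT => h4 T hT),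
      h1]
    omega
  · intro v hv
    simp only [mem_filter, mem_piAntidiag, mem_univ, implies_true, and_true] at hv
    funext T
    have := hv.2.2 T
    simp
    omega
  · intro u hu
    ext T
    simp

lemma cell_poly (g : P → ℕ) (S : Finset P) :
    ∃ p : Polynomial ℚ, p.degree < (#S : ℕ) ∧ ∀ᶠ n : ℕ in Filter.atTop,
      ((#{v ∈ piAntidiag univ n | (∀ T ∉ S, v T = g T) ∧ ∀ T, g T ≤ v T} : ℕ) : ℚ) =
        p.eval (n : ℚ) := by
  rcases Nat.eq_zero_or_pos (#S) with h0 | h0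
  · refine ⟨0, by simp [h0], ?_⟩
    filter_upwards [Filter.eventually_gt_atTop (∑ T, g T)] with n hn
    rw [cell_card g S n hn.le, h0]
    obtain ⟨k, hk⟩ : ∃ k, n - ∑ T, g T = k + 1 := ⟨n - ∑ T, g T - 1, by omega⟩
    rw [hk]
    simp
  · obtain ⟨d, hd⟩ : ∃ d, #S = d + 1 := ⟨#S - 1, by omega⟩
    refine ⟨Polynomial.preHilbertPoly ℚ d (∑ T, g T), ?_, ?_⟩
    · refine lt_of_le_of_lt Polynomial.degree_le_natDegree ?_
      rw [Polynomial.natDegree_preHilbertPoly, hd]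
      exact_mod_cast Nat.lt_succ_self d
    · filter_upwards [Filter.eventually_ge_atTop (∑ T, g T)] with n hn
      rw [cell_card g S n hn, hd, Polynomial.preHilbertPoly_eq_choose_sub_add ℚ d hn,
        Nat.multichoose_eq]
      congr 1
      rw [show d + 1 + (n - ∑ T, g T) - 1 = n - ∑ T, g T + d by omega]
      rw [Nat.choose_symm_add]

lemma trunc_eq_iff (M : ℕ) (g v : P → ℕ) (hg : ∀ T, g T ≤ M) :
    truncF M v = g ↔
      ((∀ T ∉ ({T | g T = M} : Finset P), v T = g T) ∧ ∀ T, g T ≤ v T) := by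
  constructor
  · rintro rfl
    refine ⟨fun T hT => ?_, fun T => ?_⟩
    · simp [truncF] at hT ⊢
      omega
    · simp [truncF]
  · rintro ⟨h1, h2⟩
    funext T
    have h2 := h2 T
    have h1 := h1 T
    have := hg T
    simp [truncF] at h1 ⊢
    omega

lemma count_poly (M D : ℕ) (Q : (P → ℕ) → Prop) [DecidablePred Q]
    (hQ : ∀ v, Q v ↔ Q (truncF M v))
    (hD : ∀ g, Q g → (∀ T, g T ≤ M) → #({T | g T = M} : Finset P) ≤ D) :
    ∃ p : Polynomial ℚ, p.degree < (D : ℕ) ∧ ∀ᶠ n : ℕ in Filter.atTop,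
      ((#{v ∈ piAntidiag (univ : Finset P) n | Q v} : ℕ) : ℚ) = p.eval (n : ℚ) := by
  set G : Finset (P → ℕ) := {g ∈ Fintype.piFinset (fun _ => range (M + 1)) | Q g} with hG
  have hGm : ∀ g, g ∈ G ↔ (∀ T, g T ≤ M) ∧ Q g := by
    intro g
    simp [hG, Nat.lt_succ_iff]
  choose p hp1 hp2 using fun g : P → ℕ => cell_poly g ({T | g T = M} : Finset P)
  refine ⟨∑ g ∈ G, p g, ?_, ?_⟩
  · rw [Polynomial.degree_lt_iff_coeff_zero]
    intro k hk
    rw [Polynomial.finsetSum_coeff]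
    refine Finset.sum_eq_zero fun g hg => ?_
    rw [hGm] at hg
    exact (Polynomial.degree_lt_iff_coeff_zero _ _).1 (hp1 g) k ((hD g hg.2 hg.1).trans hk)
  · have := (Filter.eventually_all_finset G).2 (fun g _ => hp2 g)
    filter_upwards [this] with n hn
    rw [Polynomial.eval_finsetSum, ← Finset.sum_congr rfl hn, ← Nat.cast_sum]
    congr 1
    rw [Finset.card_eq_sum_card_fiberwise (f := truncF M) (t := G)]
    · refine Finset.sum_congr rfl fun g hg => ?_
      rw [hGm] at hg
      congr 1
      ext v
      rw [mem_filter, mem_filter, mem_filter, ← trunc_eq_iff M g v hg.1, hQ v]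
      constructor
      · rintro ⟨⟨a, b⟩, d⟩
        exact ⟨a, d⟩
      · rintro ⟨a, d⟩
        exact ⟨⟨a, d ▸ hg.2⟩, d⟩
    · intro v hv
      simp only [Finset.coe_filter, Set.mem_ofPred_eq] at hv
      simp only [Finset.mem_coe]
      rw [hGm]
      exact ⟨fun T => by simp [truncF], (hQ v).1 hv.2⟩

lemma count_poly_min (M : ℕ) (w : P → ℕ) (Q : (P → ℕ) → Prop) [DecidablePred Q]
    (hQ : ∀ v, Q v ↔ Q (truncF M v))
    (hne : ∀ᶠ n : ℕ in Filter.atTop, ∃ v : P → ℕ, ∑ T, v T = n ∧ Q v) :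
    ∃ (α β : ℤ) (q : Polynomial ℚ), ∀ᶠ n : ℕ in Filter.atTop,
      (∃ v : P → ℕ, ∑ T, v T = n ∧ Q v ∧ ((∑ T, v T * w T : ℕ) : ℤ) = α * n + β) ∧
      (∀ v : P → ℕ, ∑ T, v T = n → Q v → α * n + β ≤ ((∑ T, v T * w T : ℕ) : ℤ)) ∧
      ((#{v ∈ piAntidiag (univ : Finset P) n |
        Q v ∧ ((∑ T, v T * w T : ℕ) : ℤ) = α * n + β} : ℕ) : ℚ) = q.eval (n : ℚ) := by
  set S : (P → ℕ) → Finset P := fun g => {T | g T = M} with hS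
  set G : Finset (P → ℕ) :=
    {g ∈ Fintype.piFinset (fun _ => range (M + 1)) | Q g ∧ (S g).Nonempty} with hG
  have hGm : ∀ g, g ∈ G ↔ (∀ T, g T ≤ M) ∧ Q g ∧ (S g).Nonempty := by
    intro g
    simp [hG, Nat.lt_succ_iff]
  set a : (P → ℕ) → ℕ := fun g => sInf (w '' (S g : Set P)) with ha
  have ha1 : ∀ g, (S g).Nonempty → ∃ T ∈ S g, w T = a g := by
    intro g hg
    have : (w '' (S g : Set P)).Nonempty := by simpa using hg
    have := Nat.sInf_mem this
    simpa using this
  have ha2 : ∀ g, ∀ T ∈ S g, a g ≤ w T := by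
    intro g T hT
    exact Nat.sInf_le ⟨T, by simpa using hT, rfl⟩
  set b : (P → ℕ) → ℤ := fun g => ∑ T, (g T : ℤ) * w T - a g * ∑ T, (g T : ℤ) with hb
  have key : ∀ g v : P → ℕ, ∀ n : ℕ, ∑ T, v T = n →
      ((∑ T, v T * w T : ℕ) : ℤ) = (a g * n + b g) + ∑ T, ((v T : ℤ) - g T) * ((w T : ℤ) - a g) := by
    intro g v n hv
    subst hv
    simp only [hb, sub_mul, mul_sub, Finset.sum_sub_distrib, ← Finset.sum_mul]
    push_cast
    ring
  have nonneg : ∀ g v : P → ℕ, (∀ T, g T ≤ M) → truncF M v = g → ∀ T,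
      0 ≤ ((v T : ℤ) - g T) * ((w T : ℤ) - a g) := by
    intro g v hg hv T
    rw [trunc_eq_iff M g v hg] at hv
    by_cases hT : T ∈ S g
    · have h1 := ha2 g T hT
      have h2 := hv.2 T
      apply mul_nonneg <;> omega
    · simp [hv.1 T hT]
  have hin : ∀ᶠ n : ℕ in Filter.atTop, ∀ v : P → ℕ, ∑ T, v T = n → Q v → truncF M v ∈ G := by
    filter_upwards [Filter.eventually_gt_atTop (Fintype.card P * M)] with n hn v hv hq
    rw [hGm]
    refine ⟨fun T => by simp [truncF], (hQ v).1 hq, ?_⟩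
    by_contra hcon
    rw [Finset.not_nonempty_iff_eq_empty] at hcon
    have : ∀ T ∈ (univ : Finset P), v T ≤ M := by
      intro T _
      have : T ∉ S (truncF M v) := by simp [hcon]
      simp [hS, truncF] at this
      omega
    have := Finset.sum_le_card_nsmul _ _ _ this
    change ∑ T, v T ≤ _ at this
    simp only [card_univ, smul_eq_mul] at this
    omega
  have hGne : G.Nonempty := by
    obtain ⟨n, ⟨v, hv, hq⟩, h2⟩ := (hne.and hin).exists
    exact ⟨_, h2 v hv hq⟩
  obtain ⟨g0, hg0, hmin⟩ := Finset.exists_min_image G (fun g => toLex ((a g : ℤ), b g)) hGne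
  have hcmp : ∀ᶠ n : ℕ in Filter.atTop, ∀ g ∈ G,
      (a g0 : ℤ) * n + b g0 ≤ a g * n + b g ∧
      ((a g0 : ℤ) * n + b g0 = a g * n + b g → a g = a g0 ∧ b g = b g0) := by
    rw [Filter.eventually_all_finset]
    intro g hg
    have := hmin g hg
    rw [Prod.Lex.toLex_le_toLex] at this
    rcases this with h | ⟨h1, h2⟩
    · simp only at h
      filter_upwards [Filter.eventually_gt_atTop (b g0 - b g).natAbs] with n hn
      have : (a g0 : ℤ) * n + n ≤ a g * n := by nlinarith
      constructor
      · omega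
      · intro; omega
    · simp only at h1 h2
      refine Filter.Eventually.of_forall fun n => ?_
      rw [← h1]
      refine ⟨by omega, fun h => ⟨by omega, by omega⟩⟩
  set S' : (P → ℕ) → Finset P := fun g => {T ∈ S g | w T = a g} with hS'
  choose p hp1 hp2 using fun g : P → ℕ => cell_poly g (S' g)
  set G2 : Finset (P → ℕ) := {g ∈ G | a g = a g0 ∧ b g = b g0} with hG2
  refine ⟨a g0, b g0, ∑ g ∈ G2, p g, ?_⟩
  have hpe := (Filter.eventually_all_finset G2).2 (fun g _ => hp2 g)
  filter_upwards [hpe, hcmp, hin, Filter.eventually_ge_atTop (∑ T, g0 T)] with n hn hcmp hin hng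
  have hle : ∀ v : P → ℕ, ∑ T, v T = n → Q v →
      (a g0 : ℤ) * n + b g0 ≤ ((∑ T, v T * w T : ℕ) : ℤ) := by
    intro v hv hq
    have h1 := hin v hv hq
    rw [key (truncF M v) v n hv]
    have h2 := (hcmp _ h1).1
    have h3 := Finset.sum_nonneg (s := univ)
      (fun T _ => nonneg (truncF M v) v ((hGm _).1 h1).1 rfl T)
    omega
  refine ⟨?_, hle, ?_⟩
  · obtain ⟨hgM, hgQ, hgS⟩ := (hGm g0).1 hg0
    obtain ⟨T0, hT0, hT0w⟩ := ha1 g0 hgS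
    set v : P → ℕ := fun T => g0 T + if T = T0 then n - ∑ T, g0 T else 0 with hv
    have hvs : ∑ T, v T = n := by
      simp [hv, Finset.sum_add_distrib]
      omega
    refine ⟨v, hvs, ?_, ?_⟩
    · rw [hQ, (trunc_eq_iff M g0 v hgM).2]
      · exact hgQ
      · refine ⟨fun T hT => ?_, fun T => by simp [hv]⟩
        have : T ≠ T0 := fun h => hT (h ▸ hT0)
        simp [hv, this]
    · rw [key g0 v n hvs, Finset.sum_eq_zero, add_zero]
      intro T _
      by_cases h : T = T0
      · subst h
        simp [hT0w]
      · simp [hv, h]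
  · rw [Polynomial.eval_finsetSum, ← Finset.sum_congr rfl hn, ← Nat.cast_sum]
    congr 1
    rw [Finset.card_eq_sum_card_fiberwise (f := truncF M) (t := G2)]
    · refine Finset.sum_congr rfl fun g hg => ?_
      simp only [hG2, mem_filter, hGm] at hg
      obtain ⟨⟨hgM, hgQ, hgS⟩, hga, hgb⟩ := hg
      congr 1
      ext v
      simp only [mem_filter, mem_piAntidiag, mem_univ, implies_true, and_true]
      constructor
      · rintro ⟨⟨hv, hq, hw⟩, ht⟩
        have ht' := (trunc_eq_iff M g v hgM).1 ht
        refine ⟨hv, fun T hT => ?_, ht'.2⟩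
        rw [key g v n hv, hga, hgb] at hw
        have h0 : ∑ T, ((v T : ℤ) - g T) * ((w T : ℤ) - a g) = 0 := by
          rw [hga]; omega
        rw [Finset.sum_eq_zero_iff_of_nonneg (fun T _ => nonneg g v hgM ht T)] at h0
        have h1 := h0 T (mem_univ _)
        by_cases hTS : T ∈ S g
        · have : w T ≠ a g := fun h => hT (by simp [hS', hTS, h])
          rcases mul_eq_zero.1 h1 with h | h <;> omega
        · exact ht'.1 T hTS
      · rintro ⟨hv, h1, h2⟩
        have ht : truncF M v = g := by
          rw [trunc_eq_iff M g v hgM]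
          refine ⟨fun T hT => h1 T fun h => hT ?_, h2⟩
          exact (Finset.mem_filter.1 h).1
        refine ⟨⟨hv, ?_, ?_⟩, ht⟩
        · rw [hQ, ht]; exact hgQ
        · rw [key g v n hv, hga, hgb, Finset.sum_eq_zero, add_zero]
          intro T _
          by_cases hT : T ∈ S' g
          · have := (Finset.mem_filter.1 hT).2
            rw [this, hga]; simp
          · simp [h1 T hT]
    · intro v hv
      simp only [Finset.coe_filter, Set.mem_ofPred_eq, mem_piAntidiag, mem_univ, implies_true,
        and_true] at hv
      obtain ⟨hv, hq, hw⟩ := hv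
      have h1 := hin v hv hq
      simp only [Finset.mem_coe, hG2, mem_filter]
      refine ⟨h1, (hcmp _ h1).2 ?_⟩
      rw [key (truncF M v) v n hv] at hw
      have h2 := (hcmp _ h1).1
      have h3 := Finset.sum_nonneg (s := univ)
        (fun T _ => nonneg (truncF M v) v ((hGm _).1 h1).1 rfl T)
      omega

end CombHelpers

section AlgHelpers

variable {c n : ℕ}

def expoF (B : Fin n → Finset (Fin c)) : (Fin c × Fin n) →₀ ℕ :=
  ∑ j : Fin n, ∑ i ∈ B j, Finsupp.single (i, j) 1

lemma expoF_apply (B : Fin n → Finset (Fin c)) (i : Fin c) (j : Fin n) :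
    expoF B (i, j) = if i ∈ B j then 1 else 0 := by
  classical
  unfold expoF
  rw [Finsupp.finsetSum_apply, Finset.sum_eq_single j]
  · rw [Finsupp.finsetSum_apply]
    simp [Finsupp.single_apply]
  · intro j' _ hj
    rw [Finsupp.finsetSum_apply]
    simp [Finsupp.single_apply, hj]
  · simp

lemma expoF_le (B B' : Fin n → Finset (Fin c)) : expoF B ≤ expoF B' ↔ ∀ j, B j ⊆ B' j := by
  constructor
  · intro h j i hi
    have := h (i, j)
    rw [expoF_apply, expoF_apply, if_pos hi] at this
    by_contra hc
    simp [hc] at this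
  · rintro h ⟨i, j⟩
    rw [expoF_apply, expoF_apply]
    have := @h j i
    split_ifs <;> simp_all

lemma matMon_eq (K : Type*) [CommSemiring K] (B : Fin n → Finset (Fin c)) :
    matMon K B = monomial (expoF B) 1 := by
  unfold matMon expoF
  rw [monomial_sum_one]
  refine Finset.prod_congr rfl fun j _ => ?_
  rw [monomial_sum_one]
  rfl

lemma matMon_inj (K : Type*) [Field K] {B B' : Fin n → Finset (Fin c)}
    (h : matMon K B = matMon K B') : B = B' := by
  rw [matMon_eq, matMon_eq] at h
  have h := monomial_left_injective (one_ne_zero) h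
  funext j
  exact Finset.Subset.antisymm ((expoF_le B B').1 h.le j) ((expoF_le B' B).1 h.ge j)

lemma matMon_mem_span (K : Type*) [Field K] (s : Set (Fin n → Finset (Fin c)))
    (B : Fin n → Finset (Fin c)) :
    matMon K B ∈ Ideal.span (matMon K '' s) ↔ ∃ B' ∈ s, ∀ j, B' j ⊆ B j := by
  have : matMon K '' s = (fun e => monomial e (1 : K)) '' (expoF '' s) := by
    rw [Set.image_image]
    exact Set.image_congr fun B _ => matMon_eq K B
  classical
  rw [this, mem_ideal_span_monomial_image, matMon_eq, support_monomial]
  simp [expoF_le]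

lemma rename_matMon (K : Type*) [CommSemiring K] (B : Fin n → Finset (Fin c))
    (σ : Equiv.Perm (Fin n)) :
    rename (fun v : Fin c × Fin n => (v.1, σ v.2)) (matMon K B) =
      matMon K (fun j => B (σ.symm j)) := by
  unfold matMon
  rw [map_prod, ← Equiv.prod_comp σ (fun j => ∏ i ∈ B (σ.symm j), X (i, j))]
  refine Finset.prod_congr rfl fun j _ => ?_
  simp [map_prod]

lemma totalDegree_matMon (K : Type*) [Field K] (B : Fin n → Finset (Fin c)) :
    (matMon K B).totalDegree = ∑ j, #(B j) := by
  rw [matMon_eq, totalDegree_monomial _ one_ne_zero, expoF]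
  change (Finsupp.sum _ fun _ e => e) = _
  rw [Finsupp.sum_fintype _ _ (fun _ => rfl), Fintype.sum_prod_type, Finset.sum_comm]
  refine Finset.sum_congr rfl fun j _ => ?_
  have : ∀ i, (∑ j : Fin n, ∑ i ∈ B j, Finsupp.single (i, j) 1 : (Fin c × Fin n) →₀ ℕ) (i, j) =
    if i ∈ B j then 1 else 0 := fun i => expoF_apply B i j
  simp [this]

lemma mem_chainIdeal (K : Type*) [Field K] {m s : ℕ} (A : Fin s → Fin m → Finset (Fin c))
    (C : Fin n → Finset (Fin c)) :
    matMon K C ∈ chainIdeal K A n ↔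
      ∃ (i : Fin s) (σ : Equiv.Perm (Fin n)), ∀ j, pad n (A i) j ⊆ C (σ j) := by
  have : chainIdeal K A n = Ideal.span (matMon K ''
      {B | ∃ (i : Fin s) (σ : Equiv.Perm (Fin n)), B = fun j => pad n (A i) (σ.symm j)}) := by
    unfold chainIdeal
    congr 1
    ext p
    constructor
    · rintro ⟨i, σ, rfl⟩
      exact ⟨_, ⟨i, σ, rfl⟩, (rename_matMon K _ σ).symm⟩
    · rintro ⟨_, ⟨i, σ, rfl⟩, rfl⟩
      exact ⟨i, σ, (rename_matMon K _ σ).symm⟩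
  rw [this, matMon_mem_span]
  constructor
  · rintro ⟨_, ⟨i, σ, rfl⟩, h⟩
    exact ⟨i, σ, fun j => by simpa using h (σ j)⟩
  · rintro ⟨i, σ, h⟩
    exact ⟨_, ⟨i, σ, rfl⟩, fun j => by simpa using h (σ.symm j)⟩

lemma mem_dual (K : Type*) [Field K] {m s : ℕ} (A : Fin s → Fin m → Finset (Fin c))
    (B : Fin n → Finset (Fin c)) :
    matMon K B ∈ dualIdeal K (chainIdeal K A n) ↔
      ¬ ∃ (i : Fin s) (σ : Equiv.Perm (Fin n)), ∀ j, Disjoint (pad n (A i) j) (B (σ j)) := by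
  have : dualIdeal K (chainIdeal K A n) = Ideal.span (matMon K ''
      {B | matMon K (fun j => (B j)ᶜ) ∉ chainIdeal K A n}) := by
    unfold dualIdeal
    congr 1
    ext p
    constructor
    · rintro ⟨B, h, rfl⟩
      exact ⟨B, h, rfl⟩
    · rintro ⟨B, h, rfl⟩
      exact ⟨B, h, rfl⟩
  rw [this, matMon_mem_span]
  simp only [Set.mem_ofPred_eq, mem_chainIdeal]
  simp only [Finset.subset_compl_iff_disjoint_right]
  constructor
  · rintro ⟨B', h, hB⟩ ⟨i, σ, h2⟩
    exact h ⟨i, σ, fun j => (h2 j).mono_right (hB _)⟩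
  · intro h
    exact ⟨B, h, fun j => Finset.Subset.refl _⟩

/-- column type counts -/
def cntF {k : ℕ} (B : Fin k → Finset (Fin c)) : Finset (Fin c) → ℕ :=
  fun T => #{j | B j = T}

lemma exists_emb {k : ℕ} (f : Fin k → Finset (Fin c)) (B : Fin n → Finset (Fin c))
    (h : ∀ T, cntF f T ≤ cntF B T) :
    ∃ e : Fin k → Fin n, Function.Injective e ∧ ∀ j, B (e j) = f j := by
  have : ∀ T, Nonempty ({j // f j = T} ↪ {j // B j = T}) := by
    intro T
    apply Function.Embedding.nonempty_of_card_le
    rw [Fintype.card_subtype, Fintype.card_subtype]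
    exact h T
  let e := fun T => (this T).some
  have hB : ∀ j, B (e (f j) ⟨j, rfl⟩).1 = f j := fun j => (e (f j) ⟨j, rfl⟩).2
  refine ⟨fun j => (e (f j) ⟨j, rfl⟩).1, ?_, hB⟩
  have aux : ∀ T T' (x : {j // f j = T}) (x' : {j // f j = T'}), T = T' →
      (e T x).1 = (e T' x').1 → x.1 = x'.1 := by
    rintro T T' x x' rfl hx
    have := (e T).injective (Subtype.ext hx)
    rw [this]
  intro j j' hj
  refine aux _ _ ⟨j, rfl⟩ ⟨j', rfl⟩ ?_ hj
  rw [← hB j, ← hB j']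
  exact congrArg B hj

lemma cntF_le_of_emb {k : ℕ} (f : Fin k → Finset (Fin c)) (B : Fin n → Finset (Fin c))
    (e : Fin k → Fin n) (he : Function.Injective e) (h : ∀ j, B (e j) = f j) (T) :
    cntF f T ≤ cntF B T := by
  unfold cntF
  apply Finset.card_le_card_of_injOn e
  · intro j hj
    simp at hj ⊢
    rw [h, hj]
  · exact he.injOn

lemma cntF_eq_iff (B B' : Fin n → Finset (Fin c)) :
    cntF B = cntF B' ↔ ∃ σ : Equiv.Perm (Fin n), ∀ j, B (σ j) = B' j := by
  constructor
  · intro h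
    obtain ⟨e, he, h2⟩ := exists_emb B' B (fun T => by rw [h])
    exact ⟨Equiv.ofBijective e (Finite.injective_iff_bijective.1 he), h2⟩
  · rintro ⟨σ, h⟩
    funext T
    apply le_antisymm
    · exact cntF_le_of_emb B B' σ.symm σ.symm.injective (fun j => by rw [← h]; simp) T
    · exact cntF_le_of_emb B' B σ σ.injective h T

lemma cntF_sum (B : Fin n → Finset (Fin c)) : ∑ T, cntF B T = n := by
  unfold cntF
  rw [← Finset.card_eq_sum_card_fiberwise (f := B) (s := univ) (t := univ)]
  · simp
  · intro x _; simp

lemma cntF_wsum (B : Fin n → Finset (Fin c)) : ∑ T, cntF B T * #T = ∑ j, #(B j) := by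
  unfold cntF
  rw [← Finset.sum_fiberwise (s := univ) (g := B)]
  refine Finset.sum_congr rfl fun T _ => ?_
  rw [Finset.sum_congr rfl (g := fun _ => #T)]
  · simp
  · intro j hj
    simp at hj
    rw [hj]

lemma cntF_surj (v : Finset (Fin c) → ℕ) (hv : ∑ T, v T = n) :
    ∃ B : Fin n → Finset (Fin c), cntF B = v := by
  have e : Fin n ≃ (Σ T : Finset (Fin c), Fin (v T)) :=
    Fintype.equivOfCardEq (by simp [hv])
  refine ⟨fun j => (e j).1, ?_⟩
  funext T
  unfold cntF
  rw [← Fintype.card_subtype]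
  have e2 : {j // (e j).1 = T} ≃ {x : (Σ T : Finset (Fin c), Fin (v T)) // x.1 = T} :=
    e.subtypeEquiv (fun j => Iff.rfl)
  rw [Fintype.card_congr (e2.trans (Equiv.sigmaSubtype T))]
  simp

lemma cntF_update (B : Fin n → Finset (Fin c)) (j : Fin n) (T' : Finset (Fin c)) :
    cntF (Function.update B j T') =
      fun S => cntF B S - (if S = B j then 1 else 0) + (if S = T' then 1 else 0) := by
  funext S
  unfold cntF
  have h1 : ({k | Function.update B j T' k = S} : Finset (Fin n)) =
      ({k | B k = S} : Finset (Fin n)).erase j ∪ (if S = T' then {j} else ∅) := by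
    ext k
    by_cases hk : k = j
    · subst hk
      by_cases h : S = T' <;> simp [h, eq_comm]
    · by_cases h : S = T' <;> simp [hk, h, Function.update_of_ne]
  rw [h1, Finset.card_union_of_disjoint]
  · congr 1
    · rw [Finset.card_erase_eq_ite]
      by_cases h : S = B j
      · simp [h]
      · rw [if_neg (by simpa using fun h' => h h'.symm), if_neg h]; rfl
    · split_ifs <;> simp
  · split_ifs <;> simp

/-- membership in the dual in terms of counts -/
def GoodF {m s : ℕ} (A : Fin s → Fin m → Finset (Fin c)) (v : Finset (Fin c) → ℕ) : Prop :=
  ¬ ∃ (i : Fin s) (f : Fin m → Finset (Fin c)), (∀ j, Disjoint (A i j) (f j)) ∧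
    ∀ T, cntF f T ≤ v T

lemma mem_dual_good (K : Type*) [Field K] {m s : ℕ} (A : Fin s → Fin m → Finset (Fin c))
    (hn : m ≤ n) (B : Fin n → Finset (Fin c)) :
    matMon K B ∈ dualIdeal K (chainIdeal K A n) ↔ GoodF A (cntF B) := by
  rw [mem_dual, GoodF]
  refine not_congr (exists_congr fun i => ?_)
  constructor
  · rintro ⟨σ, h⟩
    refine ⟨fun j => B (σ (Fin.castLE hn j)), fun j => ?_, ?_⟩
    · have := h (Fin.castLE hn j)
      simpa [pad] using this
    · exact cntF_le_of_emb _ _ (fun j => σ (Fin.castLE hn j))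
        (σ.injective.comp (Fin.castLE_injective hn)) (fun j => rfl)
  · rintro ⟨f, h1, h2⟩
    obtain ⟨e, he, h3⟩ := exists_emb f B h2
    obtain ⟨g, hg⟩ := Set.MapsTo.exists_equiv_extend_of_card_eq (α := Fin n) (t := univ)
      (s := {j : Fin n | (j : ℕ) < m})
      (f := fun j : Fin n => if h : (j : ℕ) < m then e ⟨j, h⟩ else j) (by simp)
      (by intro j _; simp) (by
        intro j hj j' hj' hjj
        simp only [Set.mem_ofPred_eq] at hj hj'
        simp only [hj, hj', dif_pos] at hjj
        have := he hjj
        simp at this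
        exact Fin.ext this)
    refine ⟨g.trans (Equiv.subtypeUnivEquiv (by simp)), fun j => ?_⟩
    by_cases hj : (j : ℕ) < m
    · have h4 := hg j hj
      simp only [hj, dif_pos] at h4
      simp only [Equiv.trans_apply, Equiv.subtypeUnivEquiv_apply, pad, hj, dif_pos]
      rw [h4, h3]
      exact h1 _
    · simp [pad, hj]

def MinGF {m s : ℕ} (A : Fin s → Fin m → Finset (Fin c)) (v : Finset (Fin c) → ℕ) : Prop :=
  GoodF A v ∧ ∀ T, 0 < v T → ∀ T', T' ⊂ T →
    ¬ GoodF A (fun S => v S - (if S = T then 1 else 0) + (if S = T' then 1 else 0))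

lemma isMinGen_iff (K : Type*) [Field K] {m s : ℕ} (A : Fin s → Fin m → Finset (Fin c))
    (hn : m ≤ n) (B : Fin n → Finset (Fin c)) :
    IsMinGen K (dualIdeal K (chainIdeal K A n)) B ↔ MinGF A (cntF B) := by
  unfold IsMinGen MinGF
  rw [mem_dual_good K A hn]
  refine and_congr_right fun _ => ?_
  constructor
  · intro h T hT T' hT'
    obtain ⟨j, hj⟩ := Finset.card_pos.1 hT
    simp at hj
    subst hj
    rw [← cntF_update, ← mem_dual_good K A hn]
    apply h
    · intro k
      by_cases hk : k = j
      · subst hk; simpa using hT'.1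
      · simp [hk]
    · intro h
      have := congrFun h j
      simp at this
      rw [this] at hT'
      exact hT'.ne rfl
  · intro h B'' h1 h2 h3
    obtain ⟨j, hj⟩ := Function.ne_iff.1 h2
    refine h (B j) (Finset.card_pos.2 ⟨j, by simp⟩) (B'' j)
      (Finset.ssubset_iff_subset_ne.2 ⟨h1 j, hj⟩) ?_
    rw [← cntF_update, ← mem_dual_good K A hn]
    rw [mem_dual] at h3 ⊢
    rintro ⟨i, σ, h4⟩
    refine h3 ⟨i, σ, fun k => (h4 k).mono_right ?_⟩
    by_cases hk : σ k = j
    · simp [hk]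
    · simpa [hk] using h1 (σ k)

lemma cntF_le {k : ℕ} (f : Fin k → Finset (Fin c)) (T) : cntF f T ≤ k := by
  unfold cntF
  exact (Finset.card_le_univ _).trans (by simp)

lemma goodF_congr {m s : ℕ} (A : Fin s → Fin m → Finset (Fin c)) (v v' : Finset (Fin c) → ℕ)
    (h : ∀ T, min (v T) m = min (v' T) m) : GoodF A v ↔ GoodF A v' := by
  unfold GoodF
  refine not_congr (exists_congr fun i => exists_congr fun f => and_congr_right fun _ =>
    forall_congr' fun T => ?_)
  have h1 := h T
  have h2 := cntF_le f T
  omega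

lemma minGF_trunc {m s : ℕ} (A : Fin s → Fin m → Finset (Fin c)) (v : Finset (Fin c) → ℕ) :
    MinGF A v ↔ MinGF A (truncF (m + 1) v) := by
  unfold MinGF
  refine and_congr (goodF_congr A _ _ fun T => ?_) (forall_congr' fun T => ?_)
  · simp only [truncF]; omega
  · have : 0 < v T ↔ 0 < truncF (m + 1) v T := by simp only [truncF]; omega
    refine imp_congr this (forall_congr' fun T' => imp_congr_right fun _ => not_congr ?_)
    refine goodF_congr A _ _ fun S => ?_
    simp only [truncF]
    split_ifs <;> omega

lemma minGF_antichain {m s : ℕ} (A : Fin s → Fin m → Finset (Fin c)) (v : Finset (Fin c) → ℕ)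
    (h : MinGF A v) : #({T | v T = m + 1} : Finset (Finset (Fin c))) ≤ c.choose (c / 2) := by
  have : IsAntichain (· ⊆ ·) (SetLike.coe ({T | v T = m + 1} : Finset (Finset (Fin c)))) := by
    intro T' hT' T hT hne hsub
    simp at hT hT'
    refine h.2 T (by omega) T' (Finset.ssubset_iff_subset_ne.2 ⟨hsub, hne⟩) ?_
    refine (goodF_congr A _ _ fun S => ?_).1 h.1
    by_cases h1 : S = T
    · subst h1
      rw [hT]
      simp only [if_true]
      split_ifs <;> omega
    · by_cases h2 : S = T'
      · subst h2
        rw [hT']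
        simp only [h1, if_true, if_false]
        omega
      · simp [h1, h2]
  simpa using this.sperner

lemma orbitOf_eq_iff (K : Type*) [Field K] (B B' : Fin n → Finset (Fin c)) :
    orbitOf K B = orbitOf K B' ↔ cntF B = cntF B' := by
  rw [cntF_eq_iff]
  constructor
  · intro h
    have h1 : matMon K B' ∈ orbitOf K B' := ⟨1, by rw [rename_matMon]; rfl⟩
    rw [← h] at h1
    obtain ⟨σ, hσ⟩ := h1
    rw [rename_matMon] at hσ
    have := matMon_inj K hσ
    exact ⟨σ.symm, fun j => by rw [this]⟩
  · rintro ⟨τ, h⟩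
    have hB' : B' = fun j => B (τ j) := funext fun j => (h j).symm
    subst hB'
    ext p
    simp only [orbitOf, rename_matMon, Set.mem_ofPred_eq]
    constructor
    · rintro ⟨σ, rfl⟩
      exact ⟨τ.trans σ, by simp⟩
    · rintro ⟨σ, rfl⟩
      exact ⟨τ.symm.trans σ, by simp⟩

lemma ncard_orbits (K : Type*) [Field K] (Q : (Finset (Fin c) → ℕ) → Prop) [DecidablePred Q]
    (R : (Fin n → Finset (Fin c)) → Prop) (h : ∀ B, R B ↔ Q (cntF B)) :
    Set.ncard {O : Set (MvPolynomial (Fin c × Fin n) K) |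
      ∃ B : Fin n → Finset (Fin c), R B ∧ O = orbitOf K B} =
    #{v ∈ piAntidiag (univ : Finset (Finset (Fin c))) n | Q v} := by
  rw [← Set.ncard_coe_finset]
  symm
  choose! F hF using fun (v : Finset (Fin c) → ℕ) (hv : ∑ T, v T = n) => cntF_surj v hv
  refine Set.ncard_congr (fun v _ => orbitOf K (F v)) ?_ ?_ ?_
  · intro v hv
    simp only [Finset.coe_filter, mem_piAntidiag, Set.mem_ofPred_eq, mem_univ, implies_true,
      and_true] at hv
    refine ⟨F v, ?_, rfl⟩
    rw [h, hF v hv.1]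
    exact hv.2
  · intro v v' hv hv' hvv
    simp only [Finset.coe_filter, mem_piAntidiag, Set.mem_ofPred_eq, mem_univ, implies_true,
      and_true] at hv hv'
    rw [orbitOf_eq_iff, hF v hv.1, hF v' hv'.1] at hvv
    exact hvv
  · rintro _ ⟨B, hB, rfl⟩
    refine ⟨cntF B, ?_, ?_⟩
    · simp only [Finset.coe_filter, mem_piAntidiag, Set.mem_ofPred_eq, mem_univ, implies_true,
        and_true]
      exact ⟨cntF_sum B, (h B).1 hB⟩
    · rw [orbitOf_eq_iff, hF _ (cntF_sum B)]

/-- existence of minimal generators -/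
lemma exists_minGF (K : Type*) [Field K] {m s : ℕ} (A : Fin s → Fin m → Finset (Fin c))
    (hA : ∀ i, ∃ j, A i j ≠ ∅) (hn : m ≤ n) : ∃ v, ∑ T, v T = n ∧ MinGF A v := by
  have h0 : ∃ B : Fin n → Finset (Fin c), matMon K B ∈ dualIdeal K (chainIdeal K A n) := by
    refine ⟨fun _ => univ, ?_⟩
    rw [mem_dual]
    rintro ⟨i, σ, h⟩
    obtain ⟨j, hj⟩ := hA i
    have := h (Fin.castLE hn j)
    simp only [pad, Fin.val_castLE, Fin.is_lt, dif_pos] at this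
    exact hj (Finset.disjoint_self_iff_empty _ |>.1 (this.mono_right (Finset.subset_univ _)))
  obtain ⟨B, hB⟩ := (Set.toFinite {B : Fin n → Finset (Fin c) |
    matMon K B ∈ dualIdeal K (chainIdeal K A n)}).exists_minimal h0
  refine ⟨cntF B, cntF_sum B, ?_⟩
  rw [← isMinGen_iff K A hn]
  refine ⟨hB.1, fun B'' h1 h2 h3 => h2 ?_⟩
  exact le_antisymm h1 (hB.2 h3 h1)

end AlgHelpers

/-- **Counting minimal generators of the Alexander dual.**  (1) The number of
`Sym(n)`-orbits of minimal monomial generators of `I_n^∨` is eventually a polynomial in `n`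
of degree at most `binom(c, ⌊c/2⌋) − 1`.  (2) The least degree of a minimal generator of
`I_n^∨` is eventually a linear function `d(n) = αn + β`, and the number of `Sym(n)`-orbits
of minimal generators of degree `d(n)` is eventually a polynomial in `n`. -/
theorem dual_min_gens_orbit_count_polynomial (K : Type*) [Field K] {c m s : ℕ}
    (hc : 0 < c) (hm : 0 < m) (hs : 0 < s)
    (A : Fin s → Fin m → Finset (Fin c)) (hA : ∀ i, ∃ j, A i j ≠ ∅) :
    (∃ (p : Polynomial ℚ) (N : ℕ), m ≤ N ∧
        p.degree ≤ (Nat.choose c (c / 2) - 1 : ℕ) ∧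
        ∀ n : ℕ, N ≤ n →
          ((Set.ncard {O : Set (MvPolynomial (Fin c × Fin n) K) |
              ∃ B : Fin n → Finset (Fin c),
                IsMinGen K (dualIdeal K (chainIdeal K A n)) B ∧ O = orbitOf K B} : ℚ) =
            p.eval (n : ℚ))) ∧
    (∃ (α β : ℤ) (q : Polynomial ℚ) (N' : ℕ), m ≤ N' ∧
        ∀ n : ℕ, N' ≤ n →
          (((sInf {d : ℕ | ∃ B : Fin n → Finset (Fin c),
              IsMinGen K (dualIdeal K (chainIdeal K A n)) B ∧
              (matMon K B : MvPolynomial (Fin c × Fin n) K).totalDegree = d} : ℕ) : ℤ) =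
            α * (n : ℤ) + β) ∧
          ((Set.ncard {O : Set (MvPolynomial (Fin c × Fin n) K) |
              ∃ B : Fin n → Finset (Fin c),
                IsMinGen K (dualIdeal K (chainIdeal K A n)) B ∧
                (matMon K B : MvPolynomial (Fin c × Fin n) K).totalDegree =
                  sInf {d : ℕ | ∃ B' : Fin n → Finset (Fin c),
                    IsMinGen K (dualIdeal K (chainIdeal K A n)) B' ∧
                    (matMon K B' : MvPolynomial (Fin c × Fin n) K).totalDegree = d} ∧
                O = orbitOf K B} : ℚ) = q.eval (n : ℚ))) := by
  classical
  have hmin : ∀ᶠ n : ℕ in Filter.atTop, ∃ v : Finset (Fin c) → ℕ, ∑ T, v T = n ∧ MinGF A v := by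
    filter_upwards [Filter.eventually_ge_atTop m] with n hn
    exact exists_minGF K A hA hn
  constructor
  · obtain ⟨p, hp, hev⟩ := count_poly (m + 1) (c.choose (c / 2)) (MinGF A) (minGF_trunc A)
      (fun g hg _ => minGF_antichain A g hg)
    obtain ⟨N, hN⟩ := Filter.eventually_atTop.1 hev
    refine ⟨p, max N m, le_max_right _ _, ?_, fun n hn => ?_⟩
    · rw [Polynomial.degree_lt_iff_coeff_zero] at hp
      rw [Polynomial.degree_le_iff_coeff_zero]
      intro k hk
      apply hp
      have : c.choose (c / 2) - 1 < k := by exact_mod_cast hk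
      omega
    · rw [← hN n (le_of_max_le_left hn), ncard_orbits K (MinGF A) _
        (fun B => isMinGen_iff K A (le_of_max_le_right hn) B)]
  · obtain ⟨α, β, q, hev⟩ := count_poly_min (m + 1) (fun T : Finset (Fin c) => #T) (MinGF A)
      (minGF_trunc A) hmin
    obtain ⟨N, hN⟩ := Filter.eventually_atTop.1 hev
    refine ⟨α, β, q, max N m, le_max_right _ _, fun n hn => ?_⟩
    have hnm := le_of_max_le_right hn
    obtain ⟨⟨v, hv, hvQ, hvw⟩, h2, h3⟩ := hN n (le_of_max_le_left hn)
    have hdeg : ∀ B : Fin n → Finset (Fin c),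
        (matMon K B).totalDegree = ∑ T, cntF B T * #T := fun B => by
      rw [totalDegree_matMon, cntF_wsum]
    have hinf : (sInf {d : ℕ | ∃ B : Fin n → Finset (Fin c),
              IsMinGen K (dualIdeal K (chainIdeal K A n)) B ∧
              (matMon K B : MvPolynomial (Fin c × Fin n) K).totalDegree = d})
              = ∑ T, v T * #T := by
      apply IsLeast.csInf_eq
      constructor
      · obtain ⟨B, hB⟩ := cntF_surj v hv
        refine ⟨B, (isMinGen_iff K A hnm B).2 (hB ▸ hvQ), ?_⟩
        rw [hdeg, hB]
      · rintro _ ⟨B, hB, rfl⟩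
        rw [hdeg]
        have := h2 _ (cntF_sum B) ((isMinGen_iff K A hnm B).1 hB)
        rw [← hvw] at this
        exact_mod_cast this
    rw [hinf]
    refine ⟨hvw, ?_⟩
    rw [← h3]
    congr 1
    rw [← ncard_orbits K (fun v => MinGF A v ∧ ((∑ T, v T * #T : ℕ) : ℤ) = α * n + β)
      (fun B => IsMinGen K (dualIdeal K (chainIdeal K A n)) B ∧
        (matMon K B : MvPolynomial (Fin c × Fin n) K).totalDegree = ∑ T, v T * #T)
      (fun B => by
        rw [isMinGen_iff K A hnm B, hdeg, ← hvw]
        norm_cast)]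
    simp only [and_assoc]


end
end

section
/- Fix positive integers c, m, s, let A_1,…,A_s be nonzero 0-1 matrices each with c rows and m columns, and for n ≥ m let I_n ⊆ R_n be the ideal generated by the Sym(n)-orbits of x^{A_1},…,x^{A_s} (each A_i regarded as a c×n matrix by appending zero columns). Then there exist a polynomial p with rational coefficients and an integer N such that for all n ≥ N, the number of Sym(n)-orbits on the (finite) set of minimal primes of I_n equals p(n). -/
open MvPolynomial Finset

noncomputable section

/-! ### Counting compositions with prescribed truncation -/

theorem cnt_trunc {D : Type*} [Fintype D] [DecidableEq D] (k : ℕ) (t : D → ℕ)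
    (n : ℕ) (hn : ∑ d, t d ≤ n) (ht : ∀ d, t d ≤ k) :
    ((Finset.piAntidiag (Finset.univ : Finset D) n).filter
      (fun u => (fun d => min (u d) k) = t)).card =
    ((Finset.univ.filter (fun d => t d = k)).card).multichoose (n - ∑ d, t d) := by
  rw [← Finset.card_finsuppAntidiag_nat_eq_multichoose]
  symm
  refine Finset.card_bij (fun v _ => fun d => v d + t d) ?_ ?_ ?_
  · intro v hv
    rw [Finset.mem_finsuppAntidiag'] at hv
    obtain ⟨h1, h2⟩ := hv
    simp only [Finset.mem_filter, Finset.mem_piAntidiag, Finset.mem_univ, implies_true, and_true]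
    refine ⟨?_, ?_⟩
    · rw [Finset.sum_add_distrib]
      rw [Finsupp.sum_fintype _ _ (by simp)] at h1
      omega
    · funext d
      by_cases hd : t d = k
      · omega
      · have : v d = 0 := by
          by_contra h
          have := h2 (Finsupp.mem_support_iff.2 h)
          simp at this
          exact hd this
        have := ht d
        omega
  · intro v _ w _ h
    ext d
    have := congrFun h d
    simpa using this
  · intro u hu
    simp only [Finset.mem_filter, Finset.mem_piAntidiag, Finset.mem_univ, implies_true,
      and_true] at hu
    obtain ⟨h1, h2⟩ := hu
    have h3 : ∀ d, min (u d) k = t d := fun d => congrFun h2 d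
    refine ⟨Finsupp.equivFunOnFinite.symm (fun d => u d - t d), ?_, ?_⟩
    · rw [Finset.mem_finsuppAntidiag']
      refine ⟨?_, ?_⟩
      · rw [Finsupp.sum_fintype _ _ (by simp)]
        simp only [Finsupp.equivFunOnFinite_symm_apply_apply]
        have : ∑ d, (u d - t d) + ∑ d, t d = n := by
          rw [← Finset.sum_add_distrib, ← h1]
          refine Finset.sum_congr rfl fun d _ => ?_
          have := h3 d
          omega
        omega
      · intro d hd
        simp at hd ⊢
        have := h3 d
        omega
    · funext d
      have := h3 d
      simp
      omega

theorem multichoose_poly (a b : ℕ) : ∃ (p : Polynomial ℚ) (N : ℕ), b ≤ N ∧ ∀ n, N ≤ n →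
    ((a.multichoose (n - b) : ℕ) : ℚ) = p.eval (n : ℚ) := by
  rcases a with _ | a
  · refine ⟨0, b + 1, by omega, fun n hn => ?_⟩
    obtain ⟨e, he⟩ : ∃ e, n - b = e + 1 := ⟨n - b - 1, by omega⟩
    simp [he]
  · refine ⟨Polynomial.preHilbertPoly ℚ a b, b, le_rfl, fun n hn => ?_⟩
    rw [Polynomial.preHilbertPoly_eq_choose_sub_add ℚ a hn, Nat.multichoose_eq]
    congr 1
    have : a + 1 + (n - b) - 1 = n - b + a := by omega
    rw [this, ← Nat.choose_symm_add]

theorem cnt_poly {D : Type*} [Fintype D] [DecidableEq D] (k : ℕ) (Q : (D → ℕ) → Prop)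
    [DecidablePred Q] (hQ : ∀ u, Q u ↔ Q (fun d => min (u d) k)) :
    ∃ (p : Polynomial ℚ) (N : ℕ), ∀ n, N ≤ n →
      ((((Finset.piAntidiag (Finset.univ : Finset D) n).filter Q).card : ℕ) : ℚ) =
        p.eval (n : ℚ) := by
  have H : ∀ t : D → ℕ, ∃ (p : Polynomial ℚ) (N : ℕ), ∑ d, t d ≤ N ∧ ∀ n, N ≤ n →
    (((Finset.univ.filter (fun d => t d = k)).card.multichoose (n - ∑ d, t d) : ℕ) : ℚ) =
      p.eval (n : ℚ) := fun t => multichoose_poly _ _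
  choose p N hN hp using H
  let TT : Finset (D → ℕ) := Fintype.piFinset (fun _ => Finset.range (k+1))
  refine ⟨∑ t ∈ TT, if Q t then p t else 0, ∑ t ∈ TT, N t, fun n hn => ?_⟩
  rw [Finset.card_eq_sum_card_fiberwise (f := fun u : D → ℕ => fun d => min (u d) k) (t := TT)]
  · rw [Polynomial.eval_finsetSum, Nat.cast_sum]
    refine Finset.sum_congr rfl fun t ht => ?_
    have hNt : N t ≤ n := le_trans (Finset.single_le_sum (f := N) (fun _ _ => Nat.zero_le _) ht) hn
    have htk : ∀ d, t d ≤ k := fun d => by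
      have := Fintype.mem_piFinset.1 ht d
      simp at this; omega
    split_ifs with hq
    · rw [← hp t n hNt, ← cnt_trunc k t n ((hN t).trans hNt) htk]
      congr 2
      ext u
      simp only [Finset.mem_filter]
      constructor
      · rintro ⟨⟨h1, h2⟩, h3⟩; exact ⟨h1, h3⟩
      · rintro ⟨h1, h3⟩; exact ⟨⟨h1, by rw [hQ, h3]; exact hq⟩, h3⟩
    · simp only [Polynomial.eval_zero, Nat.cast_eq_zero, Finset.card_eq_zero]
      ext u
      simp only [Finset.mem_filter, Finset.notMem_empty, iff_false]
      rintro ⟨⟨h1, h2⟩, h3⟩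
      rw [hQ, h3] at h2
      exact hq h2
  · intro u _
    simp [TT, Fintype.mem_piFinset]

/-! ### Algebra: minimal primes and minimal covers -/

/-- The prime generated by the variables in `f`. -/
def coverIdeal (K : Type*) [Field K] {c n : ℕ} (f : Fin n → Finset (Fin c)) :
    Ideal (MvPolynomial (Fin c × Fin n) K) :=
  Ideal.span (X '' {v | v.1 ∈ f v.2})

/-- The map killing the variables in `f`. -/
def killMap (K : Type*) [Field K] {c n : ℕ} (f : Fin n → Finset (Fin c)) :
    MvPolynomial (Fin c × Fin n) K →ₐ[K] MvPolynomial (Fin c × Fin n) K :=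
  aeval (fun v => if v.1 ∈ f v.2 then 0 else X v)

theorem coverIdeal_eq_ker (K : Type*) [Field K] {c n : ℕ} (f : Fin n → Finset (Fin c)) :
    coverIdeal K f = RingHom.ker (killMap K f) := by
  apply le_antisymm
  · rw [coverIdeal, Ideal.span_le]
    rintro _ ⟨v, hv, rfl⟩
    have hv' : v.1 ∈ f v.2 := hv
    simp [RingHom.mem_ker, killMap, hv']
  · have key : ∀ p, p - killMap K f p ∈ coverIdeal K f := by
      intro p
      induction p using MvPolynomial.induction_on with
      | C a => simp [killMap]
      | add p q hp hq =>
        rw [map_add, add_sub_add_comm]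
        exact Ideal.add_mem _ hp hq
      | mul_X p v hp =>
        have e : p * X v - killMap K f (p * X v) =
          (p - killMap K f p) * X v + killMap K f p * (X v - killMap K f (X v)) := by
          rw [map_mul]; ring
        rw [e]
        refine Ideal.add_mem _ (Ideal.mul_mem_right _ _ hp) (Ideal.mul_mem_left _ _ ?_)
        by_cases hv : v.1 ∈ f v.2
        · simp only [killMap, aeval_X, hv, if_true, sub_zero]
          exact Ideal.subset_span ⟨v, hv, rfl⟩
        · simp [killMap, hv]
    intro p hp
    have := key p
    rwa [RingHom.mem_ker.1 hp, sub_zero] at this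

theorem coverIdeal_isPrime (K : Type*) [Field K] {c n : ℕ} (f : Fin n → Finset (Fin c)) :
    (coverIdeal K f).IsPrime := by
  rw [coverIdeal_eq_ker]; exact RingHom.ker_isPrime _

theorem X_mem_coverIdeal (K : Type*) [Field K] {c n : ℕ} (f : Fin n → Finset (Fin c))
    (v : Fin c × Fin n) : (X v : MvPolynomial (Fin c × Fin n) K) ∈ coverIdeal K f ↔
      v.1 ∈ f v.2 := by
  rw [coverIdeal_eq_ker, RingHom.mem_ker]
  simp only [killMap, aeval_X]
  split_ifs with h <;> simp [h]

theorem coverIdeal_le_iff (K : Type*) [Field K] {c n : ℕ} (f : Fin n → Finset (Fin c))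
    (P : Ideal (MvPolynomial (Fin c × Fin n) K)) :
    coverIdeal K f ≤ P ↔ ∀ j, ∀ i ∈ f j, (X (i, j) : MvPolynomial (Fin c × Fin n) K) ∈ P := by
  rw [coverIdeal, Ideal.span_le]
  constructor
  · intro h j i hi
    exact h ⟨(i, j), hi, rfl⟩
  · rintro h _ ⟨v, hv, rfl⟩
    exact h v.2 v.1 hv

theorem coverIdeal_le_coverIdeal (K : Type*) [Field K] {c n : ℕ} (f g : Fin n → Finset (Fin c)) :
    coverIdeal K f ≤ coverIdeal K g ↔ f ≤ g := by
  rw [coverIdeal_le_iff]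
  simp only [X_mem_coverIdeal]
  rfl

theorem coverIdeal_injective (K : Type*) [Field K] {c n : ℕ} :
    Function.Injective (coverIdeal K (c := c) (n := n)) := fun f g h =>
  le_antisymm ((coverIdeal_le_coverIdeal K f g).1 h.le) ((coverIdeal_le_coverIdeal K g f).1 h.ge)

/-- `f` meets the support of every generator. -/
def IsCover {c m s : ℕ} (A : Fin s → Fin m → Finset (Fin c)) {n : ℕ}
    (f : Fin n → Finset (Fin c)) : Prop :=
  ∀ (i : Fin s) (σ : Equiv.Perm (Fin n)), ∃ j, ∃ a ∈ pad n (A i) j, a ∈ f (σ j)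

theorem chainIdeal_le_iff (K : Type*) [Field K] {c m s : ℕ} (A : Fin s → Fin m → Finset (Fin c))
    {n : ℕ} (P : Ideal (MvPolynomial (Fin c × Fin n) K)) [hP : P.IsPrime] :
    chainIdeal K A n ≤ P ↔ ∀ (i : Fin s) (σ : Equiv.Perm (Fin n)), ∃ j, ∃ a ∈ pad n (A i) j,
      (X (a, σ j) : MvPolynomial (Fin c × Fin n) K) ∈ P := by
  rw [chainIdeal, Ideal.span_le]
  have key : ∀ (i : Fin s) (σ : Equiv.Perm (Fin n)),
      rename (fun v : Fin c × Fin n => (v.1, σ v.2)) (matMon K (pad n (A i))) ∈ P ↔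
      ∃ j, ∃ a ∈ pad n (A i) j, (X (a, σ j) : MvPolynomial (Fin c × Fin n) K) ∈ P := by
    intro i σ
    simp only [matMon, map_prod, rename_X, hP.prod_mem_iff, Finset.mem_univ, true_and]
  constructor
  · intro h i σ
    exact (key i σ).1 (h ⟨i, σ, rfl⟩)
  · rintro h _ ⟨i, σ, rfl⟩
    exact (key i σ).2 (h i σ)

theorem chainIdeal_le_coverIdeal (K : Type*) [Field K] {c m s : ℕ}
    (A : Fin s → Fin m → Finset (Fin c)) {n : ℕ} (f : Fin n → Finset (Fin c)) :
    chainIdeal K A n ≤ coverIdeal K f ↔ IsCover A f := by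
  haveI := coverIdeal_isPrime K f
  rw [chainIdeal_le_iff]
  simp only [X_mem_coverIdeal]
  rfl

theorem mem_minimalPrimes_iff (K : Type*) [Field K] {c m s : ℕ}
    (A : Fin s → Fin m → Finset (Fin c)) {n : ℕ} (P : Ideal (MvPolynomial (Fin c × Fin n) K)) :
    P ∈ (chainIdeal K A n).minimalPrimes ↔
      ∃ f, Minimal (IsCover A) f ∧ P = coverIdeal K f := by
  classical
  have key : ∀ (P : Ideal (MvPolynomial (Fin c × Fin n) K)), P.IsPrime → chainIdeal K A n ≤ P →
      ∃ f, IsCover A f ∧ coverIdeal K f ≤ P := by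
    intro P hP hle
    refine ⟨fun j => Finset.univ.filter
      (fun i => (X (i, j) : MvPolynomial (Fin c × Fin n) K) ∈ P), ?_, ?_⟩
    · have := (chainIdeal_le_iff K A P).1 hle
      intro i σ
      obtain ⟨j, a, h1, h2⟩ := this i σ
      exact ⟨j, a, h1, by simpa using h2⟩
    · rw [coverIdeal_le_iff]
      intro j i hi
      simpa using hi
  constructor
  · rintro ⟨⟨hP, hle⟩, hmin⟩
    obtain ⟨f, hf, hfP⟩ := key P hP hle
    have hPf : P = coverIdeal K f := le_antisymm
      (hmin ⟨coverIdeal_isPrime K f, (chainIdeal_le_coverIdeal K A f).2 hf⟩ hfP) hfP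
    refine ⟨f, ⟨hf, fun g hg hgf => ?_⟩, hPf⟩
    have := hmin ⟨coverIdeal_isPrime K g, (chainIdeal_le_coverIdeal K A g).2 hg⟩
      (hPf ▸ (coverIdeal_le_coverIdeal K g f).2 hgf)
    rw [hPf] at this
    exact (coverIdeal_le_coverIdeal K f g).1 this
  · rintro ⟨f, ⟨hf, hmin⟩, rfl⟩
    refine ⟨⟨coverIdeal_isPrime K f, (chainIdeal_le_coverIdeal K A f).2 hf⟩, ?_⟩
    rintro Q ⟨hQ, hle⟩ hQf
    obtain ⟨g, hg, hgQ⟩ := key Q hQ hle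
    have hgf := (coverIdeal_le_coverIdeal K g f).1 (hgQ.trans hQf)
    exact ((coverIdeal_le_coverIdeal K f g).2 (hmin hg hgf)).trans hgQ

theorem map_coverIdeal (K : Type*) [Field K] {c n : ℕ} (f : Fin n → Finset (Fin c))
    (σ : Equiv.Perm (Fin n)) :
    Ideal.map (rename (fun v : Fin c × Fin n => (v.1, σ v.2)) :
      MvPolynomial (Fin c × Fin n) K →ₐ[K] MvPolynomial (Fin c × Fin n) K) (coverIdeal K f) =
      coverIdeal K (fun j => f (σ.symm j)) := by
  rw [coverIdeal, Ideal.map_span, coverIdeal, Set.image_image]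
  congr 1
  ext p
  simp only [Set.mem_image, Set.mem_ofPred_eq, rename_X]
  constructor
  · rintro ⟨v, hv, rfl⟩
    exact ⟨(v.1, σ v.2), by simpa using hv, rfl⟩
  · rintro ⟨v, hv, rfl⟩
    exact ⟨(v.1, σ.symm v.2), hv, by simp⟩

/-- Number of columns of each type. -/
def cnt {c n : ℕ} (f : Fin n → Finset (Fin c)) : Finset (Fin c) → ℕ :=
  fun T => (Finset.univ.filter (fun j => f j = T)).card

theorem cnt_eq_iff {c n : ℕ} (f g : Fin n → Finset (Fin c)) :
    cnt f = cnt g ↔ ∃ σ : Equiv.Perm (Fin n), g = fun j => f (σ.symm j) := by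
  constructor
  · intro h
    have e : ∀ T, Nonempty ({a // f a = T} ≃ {a // g a = T}) := fun T => by
      apply Fintype.card_eq.1
      rw [Fintype.card_subtype, Fintype.card_subtype]
      exact congrFun h T
    let σ := Equiv.ofFiberEquiv (fun T => (e T).some)
    refine ⟨σ, ?_⟩
    funext j
    have := Equiv.ofFiberEquiv_map (fun T => (e T).some) (σ.symm j)
    rw [← this]
    exact congrArg g (σ.apply_symm_apply j).symm
  · rintro ⟨σ, rfl⟩
    funext T
    refine Finset.card_bij (fun j _ => σ j) ?_ ?_ ?_
    · intro j hj; simpa using hj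
    · intro a _ b _ h; exact σ.injective h
    · intro j hj
      exact ⟨σ.symm j, by simpa using hj, by simp⟩

theorem orbit_ncard (K : Type*) [Field K] {c m s : ℕ}
    (A : Fin s → Fin m → Finset (Fin c)) (n : ℕ) :
    Set.ncard {O : Set (Ideal (MvPolynomial (Fin c × Fin n) K)) |
            ∃ P ∈ (chainIdeal K A n).minimalPrimes,
              O = {Q | ∃ σ : Equiv.Perm (Fin n),
                Q = Ideal.map
                      (rename (fun v : Fin c × Fin n => (v.1, σ v.2)) :
                        MvPolynomial (Fin c × Fin n) K →ₐ[K]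
                          MvPolynomial (Fin c × Fin n) K) P}} =
    Set.ncard {u : Finset (Fin c) → ℕ | ∃ f : Fin n → Finset (Fin c),
      Minimal (IsCover A) f ∧ u = cnt f} := by
  have e : {O : Set (Ideal (MvPolynomial (Fin c × Fin n) K)) |
            ∃ P ∈ (chainIdeal K A n).minimalPrimes,
              O = {Q | ∃ σ : Equiv.Perm (Fin n),
                Q = Ideal.map
                      (rename (fun v : Fin c × Fin n => (v.1, σ v.2)) :
                        MvPolynomial (Fin c × Fin n) K →ₐ[K]
                          MvPolynomial (Fin c × Fin n) K) P}} =
      (fun u : Finset (Fin c) → ℕ => {Q | ∃ g, cnt g = u ∧ Q = coverIdeal K g}) ''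
      {u : Finset (Fin c) → ℕ | ∃ f : Fin n → Finset (Fin c),
        Minimal (IsCover A) f ∧ u = cnt f} := by
    have h : ∀ f : Fin n → Finset (Fin c), {Q | ∃ σ : Equiv.Perm (Fin n),
                Q = Ideal.map
                      (rename (fun v : Fin c × Fin n => (v.1, σ v.2)) :
                        MvPolynomial (Fin c × Fin n) K →ₐ[K]
                          MvPolynomial (Fin c × Fin n) K) (coverIdeal K f)} =
        {Q | ∃ g, cnt g = cnt f ∧ Q = coverIdeal K g} := by
      intro f
      ext Q
      simp only [Set.mem_ofPred_eq, map_coverIdeal]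
      constructor
      · rintro ⟨σ, rfl⟩
        exact ⟨_, ((cnt_eq_iff f _).2 ⟨σ, rfl⟩).symm, rfl⟩
      · rintro ⟨g, hg, rfl⟩
        obtain ⟨σ, rfl⟩ := (cnt_eq_iff f g).1 hg.symm
        exact ⟨σ, rfl⟩
    ext O
    constructor
    · rintro ⟨P, hP, rfl⟩
      obtain ⟨f, hf, rfl⟩ := (mem_minimalPrimes_iff K A P).1 hP
      exact ⟨cnt f, ⟨f, hf, rfl⟩, (h f).symm⟩
    · rintro ⟨_, ⟨f, hf, rfl⟩, rfl⟩
      exact ⟨coverIdeal K f, (mem_minimalPrimes_iff K A _).2 ⟨f, hf, rfl⟩, (h f).symm⟩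
  rw [e]
  apply Set.ncard_image_of_injOn
  rintro _ ⟨f, hf, rfl⟩ _ ⟨g, hg, rfl⟩ h
  have : coverIdeal K f ∈ {Q | ∃ g', cnt g' = cnt g ∧ Q = coverIdeal K g'} := by
    rw [← show {Q | ∃ g', cnt g' = cnt f ∧ Q = coverIdeal K g'} =
      {Q | ∃ g', cnt g' = cnt g ∧ Q = coverIdeal K g'} from h]
    exact ⟨f, rfl, rfl⟩
  obtain ⟨g', h1, h2⟩ := this
  rw [coverIdeal_injective K h2, h1]

/-! ### Covers in terms of column counts -/

/-- Some generator avoids a cover with column counts `u`. -/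
def NonCov {c m s : ℕ} (A : Fin s → Fin m → Finset (Fin c)) (u : Finset (Fin c) → ℕ) : Prop :=
  ∃ (i : Fin s) (g : Fin m → Finset (Fin c)),
    (∀ j, ∀ a ∈ A i j, a ∉ g j) ∧ ∀ T, cnt g T ≤ u T

theorem nonCov_congr {c m s : ℕ} (A : Fin s → Fin m → Finset (Fin c))
    (u w : Finset (Fin c) → ℕ) (h : ∀ T, min (u T) m = min (w T) m) :
    NonCov A u ↔ NonCov A w := by
  have hle : ∀ (g : Fin m → Finset (Fin c)) T, cnt g T ≤ m := fun g T =>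
    (Finset.card_le_univ _).trans (by simp)
  refine exists_congr fun i => exists_congr fun g => and_congr_right fun _ =>
    forall_congr' fun T => ?_
  have := hle g T
  have := h T
  omega

theorem isCover_iff {c m s : ℕ} (A : Fin s → Fin m → Finset (Fin c)) {n : ℕ} (hmn : m ≤ n)
    (f : Fin n → Finset (Fin c)) : IsCover A f ↔ ¬ NonCov A (cnt f) := by
  rw [← not_iff_not, not_not]
  constructor
  · intro h
    simp only [IsCover, not_forall, not_exists, not_and] at h
    obtain ⟨i, σ, h⟩ := h
    refine ⟨i, fun j => f (σ (Fin.castLE hmn j)), ?_, ?_⟩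
    · intro j a ha
      refine h (Fin.castLE hmn j) a ?_
      simpa [pad] using ha
    · intro T
      refine Finset.card_le_card_of_injOn (fun j => σ (Fin.castLE hmn j)) ?_ ?_
      · intro j hj
        simpa using hj
      · intro a _ b _ hab
        exact Fin.castLE_injective hmn (σ.injective hab)
  · rintro ⟨i, g, hg, hcnt⟩ hcov
    have e : ∀ T, Nonempty ({a // g a = T} ↪ {a // f a = T}) := fun T => by
      apply Function.Embedding.nonempty_of_card_le
      rw [Fintype.card_subtype, Fintype.card_subtype]
      exact hcnt T
    let τ : Fin m → Fin n := fun j => ((e (g j)).some ⟨j, rfl⟩).1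
    have hτ : ∀ j, f (τ j) = g j := fun j => ((e (g j)).some ⟨j, rfl⟩).2
    have aux : ∀ T j j' (hj : g j = T) (hj' : g j' = T),
        ((e T).some ⟨j, hj⟩).1 = ((e T).some ⟨j', hj'⟩).1 → j = j' := by
      intro T j j' hj hj' h
      have := (e T).some.injective (Subtype.ext h)
      exact congrArg Subtype.val this
    have aux2 : ∀ T j (hj : g j = T), τ j = ((e T).some ⟨j, hj⟩).1 := by
      rintro T j rfl; rfl
    have hinj : Function.Injective τ := by
      intro j j' h
      have h1 : g j = g j' := by rw [← hτ j, ← hτ j', h]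
      apply aux (g j') j j' h1 rfl
      rw [← aux2, ← aux2]; exact h
    have := Equiv.Perm.isMultiplyPretransitive (Fin n) m
    obtain ⟨σ, hσ⟩ := MulAction.exists_smul_eq (Equiv.Perm (Fin n))
      (⟨Fin.castLE hmn, Fin.castLE_injective hmn⟩ : Fin m ↪ Fin n) (⟨τ, hinj⟩ : Fin m ↪ Fin n)
    have hσ' : ∀ j, σ (Fin.castLE hmn j) = τ j := fun j => DFunLike.congr_fun hσ j
    obtain ⟨j, a, ha, haf⟩ := hcov i σ
    unfold pad at ha
    split_ifs at ha with hj
    · refine hg ⟨j, hj⟩ a ha ?_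
      rw [← hτ, ← hσ']
      exact haf
    · simp at ha

/-- Column counts after removing `a` from one column of type `T`. -/
def upd {c : ℕ} (u : Finset (Fin c) → ℕ) (T : Finset (Fin c)) (a : Fin c) :
    Finset (Fin c) → ℕ :=
  fun S => if S = T then u S - 1 else if S = T.erase a then u S + 1 else u S

theorem cnt_update {c n : ℕ} (f : Fin n → Finset (Fin c)) (j : Fin n) (a : Fin c)
    (ha : a ∈ f j) : cnt (Function.update f j ((f j).erase a)) = upd (cnt f) (f j) a := by
  have hne : (f j).erase a ≠ f j := fun h => by
    have := Finset.notMem_erase a (f j)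
    rw [h] at this
    exact this ha
  funext S
  unfold upd cnt
  split_ifs with h1 h2
  · subst h1
    rw [← Finset.card_erase_of_mem (a := j) (by simp)]
    congr 1
    ext x
    by_cases hx : x = j
    · subst hx; simp [hne]
    · simp [hx]
  · subst h2
    rw [← Finset.card_insert_of_notMem (a := j) (by simpa using hne.symm)]
    congr 1
    ext x
    by_cases hx : x = j
    · subst hx; simp
    · simp [hx]
  · congr 1
    ext x
    by_cases hx : x = j
    · subst hx; simp [Ne.symm h1, Ne.symm h2]
    · simp [hx]

/-- The counts of a minimal cover. -/
def Good {c m s : ℕ} (A : Fin s → Fin m → Finset (Fin c)) (u : Finset (Fin c) → ℕ) : Prop :=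
  ¬ NonCov A u ∧ ∀ T, ∀ a ∈ T, 0 < u T → NonCov A (upd u T a)

theorem good_trunc {c m s : ℕ} (A : Fin s → Fin m → Finset (Fin c)) (u : Finset (Fin c) → ℕ) :
    Good A u ↔ Good A (fun T => min (u T) (m + 1)) := by
  refine and_congr (not_congr (nonCov_congr A _ _ fun T => by omega)) ?_
  refine forall_congr' fun T => forall_congr' fun a => forall_congr' fun _ => ?_
  have h1 : 0 < u T ↔ 0 < min (u T) (m + 1) := by omega
  rw [h1]
  refine imp_congr_right fun _ => nonCov_congr A _ _ fun S => ?_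
  simp only [upd]
  split_ifs <;> omega

theorem isCover_mono {c m s : ℕ} (A : Fin s → Fin m → Finset (Fin c)) {n : ℕ}
    {f g : Fin n → Finset (Fin c)} (h : f ≤ g) (hf : IsCover A f) : IsCover A g := fun i σ => by
  obtain ⟨j, a, h1, h2⟩ := hf i σ
  exact ⟨j, a, h1, h _ h2⟩

theorem minimal_iff_good {c m s : ℕ} (A : Fin s → Fin m → Finset (Fin c)) {n : ℕ} (hmn : m ≤ n)
    (f : Fin n → Finset (Fin c)) : Minimal (IsCover A) f ↔ Good A (cnt f) := by
  constructor
  · rintro ⟨hf, hmin⟩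
    refine ⟨(isCover_iff A hmn f).1 hf, ?_⟩
    intro T a ha hT
    obtain ⟨j, hj⟩ := Finset.card_pos.1 hT
    simp only [Finset.mem_filter, Finset.mem_univ, true_and] at hj
    subst hj
    rw [← cnt_update f j a ha]
    by_contra hcon
    have hle : Function.update f j ((f j).erase a) ≤ f :=
      update_le_iff.2 ⟨Finset.erase_subset _ _, fun _ _ => le_rfl⟩
    have := hmin ((isCover_iff A hmn _).2 hcon) hle j ha
    simp at this
  · rintro ⟨h1, h2⟩
    refine ⟨(isCover_iff A hmn f).2 h1, ?_⟩
    intro g hg hgf j a ha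
    by_contra hag
    refine (isCover_iff A hmn (Function.update f j ((f j).erase a))).1
      (isCover_mono A ?_ hg) ?_
    · refine le_update_iff.2 ⟨?_, fun x _ => hgf x⟩
      exact Finset.subset_erase.2 ⟨hgf j, hag⟩
    · rw [cnt_update f j a ha]
      exact h2 _ a ha (Finset.card_pos.2 ⟨j, by simp⟩)

theorem sum_cnt {c n : ℕ} (f : Fin n → Finset (Fin c)) : ∑ T, cnt f T = n := by
  have := Finset.card_eq_sum_card_fiberwise (f := f) (s := Finset.univ) (t := Finset.univ)
    (by simp)
  simpa [cnt] using this.symm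

theorem exists_cnt {c n : ℕ} (u : Finset (Fin c) → ℕ) (hu : ∑ T, u T = n) :
    ∃ f : Fin n → Finset (Fin c), cnt f = u := by
  have e : Nonempty (Fin n ≃ Σ T, Fin (u T)) := by
    apply Fintype.card_eq.1
    simp [hu]
  obtain ⟨e⟩ := e
  refine ⟨fun j => (e j).1, ?_⟩
  funext T
  have : u T = (Finset.univ : Finset (Fin (u T))).card := by simp
  rw [this]
  symm
  refine Finset.card_bij (fun x _ => e.symm ⟨T, x⟩) ?_ ?_ ?_
  · intro x _; simp
  · intro x _ y _ h
    simpa using h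
  · intro j hj
    simp only [Finset.mem_filter, Finset.mem_univ, true_and] at hj
    subst hj
    exact ⟨(e j).2, by simp, by simp⟩

/-- **Counting orbits of minimal primes.**  For a `Sym`-invariant chain of squarefree
monomial ideals, the number of `Sym(n)`-orbits of minimal primes of `I_n` is eventually a
polynomial in `n`. -/
theorem minimal_primes_orbit_count_polynomial (K : Type*) [Field K] {c m s : ℕ}
    (hc : 0 < c) (hm : 0 < m) (hs : 0 < s)
    (A : Fin s → Fin m → Finset (Fin c)) (hA : ∀ i, ∃ j, A i j ≠ ∅) :
    ∃ (p : Polynomial ℚ) (N : ℕ), m ≤ N ∧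
      ∀ n : ℕ, N ≤ n →
        (Set.ncard {O : Set (Ideal (MvPolynomial (Fin c × Fin n) K)) |
            ∃ P ∈ (chainIdeal K A n).minimalPrimes,
              O = {Q | ∃ σ : Equiv.Perm (Fin n),
                Q = Ideal.map
                      (rename (fun v : Fin c × Fin n => (v.1, σ v.2)) :
                        MvPolynomial (Fin c × Fin n) K →ₐ[K]
                          MvPolynomial (Fin c × Fin n) K) P}} : ℚ) =
          p.eval (n : ℚ) := by
  classical
  obtain ⟨p, N, hp⟩ := cnt_poly (m + 1) (Good A) (good_trunc A)
  refine ⟨p, max N m, le_max_right _ _, fun n hn => ?_⟩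
  have hmn : m ≤ n := (le_max_right _ _).trans hn
  rw [orbit_ncard, ← hp n ((le_max_left _ _).trans hn), ← Set.ncard_coe_finset]
  congr 2
  ext u
  simp only [Set.mem_ofPred_eq, Finset.coe_filter, Finset.mem_piAntidiag, Finset.mem_univ,
    implies_true, and_true]
  constructor
  · rintro ⟨f, hf, rfl⟩
    exact ⟨sum_cnt f, (minimal_iff_good A hmn f).1 hf⟩
  · rintro ⟨h1, h2⟩
    obtain ⟨f, rfl⟩ := exists_cnt u h1
    exact ⟨f, (minimal_iff_good A hmn f).2 h2, rfl⟩

end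
end
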